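/- Let X be a complex Banach space with dim X > 2, let 𝒩 be a non-trivial nest on X with dim X_-^⊥ > 1, let 𝒜 be a subalgebra of Alg 𝒩 satisfying (♠1)–(♠5), let n ≥ 2, and let L : 𝒜 → B(X) be a Lie n-derivation. Then for all f_1, f_2 ∈ X_-^⊥(𝒜)∖{0} and all y_1, y_2 ∈ X with f_1(y_1) = 1 and f_2(y_2) = 1, there exists c ∈ ℂ such that for every x ∈ X, (L(x⊗f_1) − h(x,f_1)I)y_1 − (L(x⊗f_2) − h(x,f_2)I)y_2 = c x. -/

import Mathlib

open scoped Classical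

set_option synthInstance.maxHeartbeats 1000000
set_option maxHeartbeats 1000000

noncomputable section

/-- The `(n-1)`-th commutator polynomial `p_n(x_1, …, x_n)`, defined recursively by
`p_1(x_1) = x_1` and `p_k(x_1, …, x_k) = [p_{k-1}(x_1, …, x_{k-1}), x_k]`. -/
def commPoly {A : Type*} [NonUnitalNonAssocRing A] : (n : ℕ) → (Fin n → A) → A
  | 0, _ => 0
  | 1, a => a 0
  | n + 2, a =>
      commPoly (n + 1) (fun i => a i.castSucc) * a (Fin.last (n + 1)) -
        a (Fin.last (n + 1)) * commPoly (n + 1) (fun i => a i.castSucc)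

/-- A nest of closed subspaces of `X`: it contains `{0}` and `X`, is totally ordered by
inclusion, is closed under arbitrary intersections, and contains the norm-closed linear
span of the union of any subfamily. -/
structure IsNest {X : Type*} [NormedAddCommGroup X] [NormedSpace ℂ X]
    (𝒩 : Set (Submodule ℂ X)) : Prop where
  closed : ∀ N ∈ 𝒩, IsClosed (N : Set X)
  bot_mem : (⊥ : Submodule ℂ X) ∈ 𝒩
  top_mem : (⊤ : Submodule ℂ X) ∈ 𝒩
  total : ∀ N₁ ∈ 𝒩, ∀ N₂ ∈ 𝒩, N₁ ≤ N₂ ∨ N₂ ≤ N₁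
  sInf_mem : ∀ S ⊆ 𝒩, sInf S ∈ 𝒩
  closure_sSup_mem : ∀ S ⊆ 𝒩, (sSup S).topologicalClosure ∈ 𝒩

/-- The nest algebra `Alg 𝒩` of all bounded operators leaving every member of `𝒩`
invariant. -/
def nestAlgebra {X : Type*} [NormedAddCommGroup X] [NormedSpace ℂ X]
    (𝒩 : Set (Submodule ℂ X)) : Subalgebra ℂ (X →L[ℂ] X) where
  carrier := {T : X →L[ℂ] X | ∀ N ∈ 𝒩, ∀ x ∈ N, T x ∈ N}
  mul_mem' := fun {a b} ha hb N hN x hx => ha N hN _ (hb N hN x hx)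
  one_mem' := fun N _ x hx => hx
  add_mem' := fun {a b} ha hb N hN x hx => N.add_mem (ha N hN x hx) (hb N hN x hx)
  zero_mem' := fun N _ _ _ => N.zero_mem
  algebraMap_mem' := fun r N hN x hx => by
    simpa [Algebra.algebraMap_eq_smul_one] using N.smul_mem r hx

/-- `X₋` : the norm-closed linear span of the union of all members of `𝒩` different
from `X`. -/
def nestXminus {X : Type*} [NormedAddCommGroup X] [NormedSpace ℂ X]
    (𝒩 : Set (Submodule ℂ X)) : Submodule ℂ X :=
  (sSup {N | N ∈ 𝒩 ∧ N ≠ (⊤ : Submodule ℂ X)}).topologicalClosure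

/-- The annihilator of a subspace `S` of `X` inside the continuous dual `X*`. -/
def annihilatorOf {X : Type*} [NormedAddCommGroup X] [NormedSpace ℂ X]
    (S : Submodule ℂ X) : Submodule ℂ (X →L[ℂ] ℂ) where
  carrier := {f | ∀ x ∈ S, f x = 0}
  add_mem' := fun {f g} hf hg x hx => by simp [hf x hx, hg x hx]
  zero_mem' := fun x _ => by simp
  smul_mem' := fun c f hf x hx => by simp [hf x hx]

/-- `X(𝒜)` : the set of `x ∈ X` such that `x ⊗ f ∈ 𝒜` for some nonzero `f ∈ X*`.
Here `x ⊗ f` is the rank-one operator `y ↦ f(y) x`, i.e. `f.smulRight x`. -/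
def XofA {X : Type*} [NormedAddCommGroup X] [NormedSpace ℂ X]
    (𝒜 : NonUnitalSubalgebra ℂ (X →L[ℂ] X)) : Set X :=
  {x | ∃ f : X →L[ℂ] ℂ, f ≠ 0 ∧ f.smulRight x ∈ 𝒜}

/-- `X₋^⊥(𝒜)` : the set of `f ∈ X₋^⊥` such that `x ⊗ f ∈ 𝒜` for some nonzero
`x ∈ X`. -/
def XannA {X : Type*} [NormedAddCommGroup X] [NormedSpace ℂ X]
    (𝒩 : Set (Submodule ℂ X)) (𝒜 : NonUnitalSubalgebra ℂ (X →L[ℂ] X)) :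
    Set (X →L[ℂ] ℂ) :=
  {f | (∀ x ∈ nestXminus 𝒩, f x = 0) ∧ ∃ x : X, x ≠ 0 ∧ f.smulRight x ∈ 𝒜}

/-- `L` is a Lie `n`-derivation from the (not necessarily unital) subalgebra `𝒜` of
`B(X)` into `B(X)`. -/
def IsLieNDerivNU {X : Type*} [NormedAddCommGroup X] [NormedSpace ℂ X]
    (𝒜 : NonUnitalSubalgebra ℂ (X →L[ℂ] X)) (n : ℕ)
    (L : ↥𝒜 →ₗ[ℂ] (X →L[ℂ] X)) : Prop :=
  ∀ a : Fin n → ↥𝒜,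
    L (commPoly n a) =
      ∑ k : Fin n,
        commPoly n (Function.update (fun i => ((a i : X →L[ℂ] X))) k (L (a k)))

/-- The scalar `h(x, f)` attached to a Lie-type derivation `L`: it is `0` when
`f(x) = 0`, and `f(L(x ⊗ f) x) / f(x)` otherwise. -/
def hAux {X : Type*} [NormedAddCommGroup X] [NormedSpace ℂ X]
    (𝒜 : NonUnitalSubalgebra ℂ (X →L[ℂ] X)) (L : ↥𝒜 →ₗ[ℂ] (X →L[ℂ] X))
    (x : X) (f : X →L[ℂ] ℂ) : ℂ :=
  if f x = 0 then 0
  else if hm : f.smulRight x ∈ 𝒜 then f ((L ⟨f.smulRight x, hm⟩) x) / f x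
  else 0

/-!
Let `p = y ⊗ f` be idempotent and `a = z ⊗ f` with `f z = 0`, so that `[a, p] = a`. Expanding
`L (p_n(a, p, …, p)) = L a` shows that the failure `[L a, p] + [a, L p] - L a` of `L` to be a Lie
derivation at `[a, p]` is killed by `∑ j < n - 1, D ^ j` with `D x = [x, p]`, hence lies in the
Peirce block `p B(X) (1 - p)`. Polarizing the resulting relations in `y` shows that modulo `ℂ x`
the operator `L (x ⊗ f)` acts on `ker f` as the scalar `h(x, f)`. Such a scalar is unique, and as
`dim X > 2` any two functionals have a common nonzero kernel vector on which to compare scalars,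
so `h` is bilinear. Therefore `(f, y) ↦ (x ↦ (L (x ⊗ f) - h(x, f)) y)` is bilinear and takes
scalar values whenever `f y = 0`, which makes it a multiple of `f y` modulo scalars.
-/

section Commutators

section NonAssoc

variable {R : Type*} [NonUnitalNonAssocRing R]

/-- The inner map `x ↦ [x, p]`, as an element of the ring of additive endomorphisms of `R`, in
which the iterated commutators of `p_n(x, p, …, p)` become powers. -/
def rightCommutator (p : R) : Module.End ℤ R :=
  LinearMap.mulRight ℤ p - LinearMap.mulLeft ℤ p

lemma rightCommutator_apply (p x : R) : rightCommutator p x = ⁅x, p⁆ := rfl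

lemma commPoly_snoc {m : ℕ} (a : Fin (m + 1) → R) (x : R) :
    commPoly (m + 2) (Fin.snoc a x : Fin (m + 2) → R) = ⁅commPoly (m + 1) a, x⁆ := by
  simp only [commPoly, Fin.snoc_castSucc, Fin.snoc_last, Ring.lie_def]

lemma sum_commPoly_update_snoc {m : ℕ} (a b : Fin (m + 1) → R) (x y : R) :
    ∑ k, commPoly (m + 2) (Function.update (Fin.snoc a x : Fin (m + 2) → R) k
        ((Fin.snoc b y : Fin (m + 2) → R) k)) =
      ⁅∑ k, commPoly (m + 1) (Function.update a k (b k)), x⁆ + ⁅commPoly (m + 1) a, y⁆ := by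
  rw [Fin.sum_univ_castSucc]
  simp only [Fin.snoc_castSucc, Fin.snoc_last, ← Fin.snoc_update, Fin.update_snoc_last,
    commPoly_snoc, ← rightCommutator_apply, map_sum]

lemma cons_const_succ {α : Type*} (a p : α) (m : ℕ) :
    (Fin.cons a fun _ : Fin (m + 1) => p : Fin (m + 2) → α) =
      Fin.snoc (Fin.cons a fun _ : Fin m => p : Fin (m + 1) → α) p := by
  rw [← Fin.cons_snoc_eq_snoc_cons]
  congr 1
  ext i
  refine Fin.lastCases ?_ (fun j => ?_) i <;> simp

lemma commPoly_cons_const {a p : R} (h : ⁅a, p⁆ = a) (m : ℕ) :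
    commPoly (m + 1) (Fin.cons a fun _ => p : Fin (m + 1) → R) = a := by
  induction m with
  | zero => rfl
  | succ m ih => rw [cons_const_succ, commPoly_snoc, ih, h]

lemma sum_commPoly_update_cons_const {a p : R} (h : ⁅a, p⁆ = a) (b s : R) (m : ℕ) :
    ∑ k, commPoly (m + 1) (Function.update (Fin.cons a fun _ => p : Fin (m + 1) → R) k
        ((Fin.cons b fun _ => s : Fin (m + 1) → R) k)) =
      (rightCommutator p ^ m) b + (∑ j ∈ Finset.range m, rightCommutator p ^ j) ⁅a, s⁆ := by
  induction m with
  | zero => simp [commPoly]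
  | succ m ih =>
    rw [cons_const_succ, cons_const_succ, sum_commPoly_update_snoc, ih, commPoly_cons_const h,
      ← rightCommutator_apply, geom_sum_succ, pow_succ']
    simp only [map_add, Module.End.mul_apply, LinearMap.add_apply, Module.End.one_apply,
      add_assoc]

end NonAssoc

/-- `IsLieNDerivNU` for a subalgebra of an arbitrary algebra `R` in place of `B(X)`. -/
def IsLieNDerivation {K R : Type*} [CommRing K] [NonUnitalNonAssocRing R] [Module K R]
    (𝒜 : NonUnitalSubalgebra K R) (n : ℕ) (L : 𝒜 →ₗ[K] R) : Prop :=
  ∀ a : Fin n → 𝒜,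
    L (commPoly n a) = ∑ k, commPoly n (Function.update (fun i => (a i : R)) k (L (a k)))

lemma IsLieNDerivation.geom_sum_apply_eq_zero {K R : Type*} [CommRing K]
    [NonUnitalNonAssocRing R] [Module K R] {𝒜 : NonUnitalSubalgebra K R} {m : ℕ} {L : 𝒜 →ₗ[K] R}
    (hL : IsLieNDerivation 𝒜 (m + 1) L) {a p : 𝒜} (h : ⁅(a : R), (p : R)⁆ = a) :
    (∑ j ∈ Finset.range m, rightCommutator (p : R) ^ j) (⁅L a, (p : R)⁆ + ⁅(a : R), L p⁆ - L a) =
      0 := by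
  have hap : ⁅a, p⁆ = a := Subtype.ext h
  have hLa : L a = (rightCommutator (p : R) ^ m) (L a) +
      (∑ j ∈ Finset.range m, rightCommutator (p : R) ^ j) ⁅(a : R), L p⁆ := by
    rw [← sum_commPoly_update_cons_const h]
    have hLn := hL (Fin.cons a fun _ => p)
    rw [commPoly_cons_const hap] at hLn
    convert hLn using 5 with k
    · exact (congrFun (Fin.comp_cons (fun t : 𝒜 => (t : R)) a fun _ => p) _).symm
    · exact congrFun (Fin.comp_cons L a fun _ => p).symm k
  have hgeom := DFunLike.congr_fun (geom_sum_mul (rightCommutator (p : R)) m) (L a)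
  simp only [Module.End.mul_apply, LinearMap.sub_apply, Module.End.one_apply] at hgeom
  rw [add_sub_right_comm, map_add, ← rightCommutator_apply, hgeom]
  rw [sub_add_eq_add_sub, ← hLa, sub_self]

/-- With respect to the Peirce decomposition of `p`, the map `x ↦ [x, p]` acts as `1` on
`(1 - p)Rp`, as `-1` on `pR(1 - p)` and as `0` on the rest, so the geometric sum is injective on
every block except `pR(1 - p)`. -/
lemma mul_eq_zero_and_mul_eq_self_of_geom_sum_apply_eq_zero {R : Type*} [NonUnitalRing R] {p e : R}
    (hp : IsIdempotentElem p) {m : ℕ} (hm : IsSMulRegular R m)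
    (he : (∑ j ∈ Finset.range m, rightCommutator p ^ j) e = 0) : e * p = 0 ∧ p * e = e := by
  have e_mem_range : ∃ x : R, e = ⁅x, p⁆ := by
    obtain _ | m := m
    · exact ⟨0, by simp [hm.right_eq_zero_of_smul (zero_nsmul e), Ring.lie_def]⟩
    · refine ⟨-(∑ j ∈ Finset.range m, rightCommutator p ^ j) e, ?_⟩
      rw [geom_sum_succ] at he
      rw [← rightCommutator_apply, map_neg]
      exact eq_neg_of_add_eq_zero_right he
  have lie_mul (x : R) : ⁅x, p⁆ * p = ⁅x * p, p⁆ := by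
    simp only [Ring.lie_def, sub_mul, mul_assoc]
  have peirce : p * e * p = 0 ∧ e = e * p + p * e := by
    obtain ⟨x, rfl⟩ := e_mem_range
    simp only [Ring.lie_def, sub_mul, mul_sub, mul_assoc, hp.mul_mul_self]
    simp [← mul_assoc, hp.eq]
  have fixed : ⁅e * p, p⁆ = e * p := by
    rw [Ring.lie_def, mul_assoc, hp.eq, ← mul_assoc, peirce.1, sub_zero]
  have pow_mul (j : ℕ) : (rightCommutator p ^ j) e * p = e * p := by
    induction j with
    | zero => rfl
    | succ j ih =>
      rw [pow_succ', Module.End.mul_apply, rightCommutator_apply, lie_mul, ih, fixed]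
  have e_mul : e * p = 0 := by
    have hsum : m • (e * p) = 0 := by
      rw [← zero_mul p, ← he, LinearMap.sum_apply, Finset.sum_mul]
      simp [pow_mul]
    exact hm.right_eq_zero_of_smul hsum
  exact ⟨e_mul, by simpa [e_mul] using peirce.2.symm⟩

end Commutators

section LinearAlgebra

open Module

variable {K X : Type*} [Field K] [AddCommGroup X] [Module K X]

lemma rank_le_rank_ker_add_one (f : Dual K X) : Module.rank K X ≤ Module.rank K f.ker + 1 := by
  rw [← Submodule.rank_quotient_add_rank f.ker, add_comm]
  gcongr
  simpa using LinearMap.lift_rank_le_of_injective (f.ker.liftQ f le_rfl)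
    (LinearMap.ker_eq_bot.mp (f.ker.ker_liftQ_eq_bot f le_rfl le_rfl))

lemma one_lt_rank_ker (h : 2 < Module.rank K X) (f : Dual K X) : 1 < Module.rank K f.ker := by
  by_contra! hle
  refine h.not_ge ((rank_le_rank_ker_add_one f).trans ?_)
  rw [← one_add_one_eq_two]
  gcongr

lemma exists_ne_zero_apply_eq_zero_of_two_lt_rank (h : 2 < Module.rank K X) (f g : Dual K X) :
    ∃ w, w ≠ 0 ∧ f w = 0 ∧ g w = 0 := by
  have rank_ker_f : 1 < Module.rank K f.ker := one_lt_rank_ker h f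
  have rank_ker_g : 0 < Module.rank K (g.domRestrict f.ker).ker := by
    by_contra! hle
    exact rank_ker_f.not_ge ((rank_le_rank_ker_add_one (g.domRestrict f.ker)).trans
      (by rw [nonpos_iff_eq_zero.mp hle, zero_add]))
  obtain ⟨⟨w, hw⟩, hw_ne⟩ := rank_pos_iff_exists_ne_zero.mp rank_ker_g
  exact ⟨w, fun hw₀ => hw_ne (Subtype.ext (Subtype.ext hw₀)), w.2, hw⟩

lemma exists_eq_one_and_ne_zero {f g : Dual K X} {x y : X} (hx : f x = 1) (hy : g y = 1) :
    ∃ v, f v = 1 ∧ g v ≠ 0 := by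
  by_cases hgx : g x = 0
  · by_cases hfy : f y = 0
    · exact ⟨x + y, by simp [hx, hfy], by simp [hgx, hy]⟩
    · exact ⟨(f y)⁻¹ • y, by simp [hfy], by simp [hy, hfy]⟩
  · exact ⟨x, hx, hgx⟩

lemma sub_mem_of_apply_eq_one {V M : Type*} [AddCommGroup V] [Module K V] [AddCommGroup M]
    [Module K M] (B : V →ₗ[K] Dual K X) (β : V →ₗ[K] X →ₗ[K] M) (S : Submodule K M)
    (hβ : ∀ f x, B f x = 0 → β f x ∈ S) {f g : V} {x y : X} (hx : B f x = 1) (hy : B g y = 1) :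
    β f x - β g y ∈ S := by
  obtain ⟨v, hv, hb⟩ := exists_eq_one_and_ne_zero hx hy
  set b := B g v
  have mem₁ : β f (x - v) ∈ S := hβ _ _ (by simp [hx, hv])
  have mem₂ : β (b • f - g) v ∈ S := hβ _ _ (by simp [hv, b])
  have mem₃ : β g (b • y - v) ∈ S := hβ _ _ (by simp [hy, b])
  have decomposition : b • (β f x - β g y) =
      b • β f (x - v) + β (b • f - g) v - β g (b • y - v) := by
    simp only [map_sub, map_smul, LinearMap.sub_apply, LinearMap.smul_apply]
    module
  rw [← S.smul_mem_iff hb, decomposition]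
  exact S.sub_mem (S.add_mem (S.smul_mem b mem₁) mem₂) mem₃

/-- The linear functional `h` is the scalar part of the operators `ℓ x` on `ker f`: they act there
as `h x • w`, up to a multiple of `x` which depends on `w` only. -/
def IsScalarPart (f : Dual K X) (ℓ : X →ₗ[K] End K X) (h : Dual K X) : Prop :=
  ∀ w, f w = 0 → ∃ c : K, ∀ x, ℓ x w - h x • w = c • x

lemma eq_zero_of_smul_eq_smul (hX : 1 < Module.rank K X) {w : X} (hw : w ≠ 0) {h : Dual K X} {c : K}
    (H : ∀ x, h x • w = c • x) : h = 0 := by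
  have hc : c = 0 := by
    by_contra hc
    refine hX.not_ge (rank_le_one_iff.mpr ⟨w, fun x => ⟨c⁻¹ * h x, ?_⟩⟩)
    rw [mul_smul, H, inv_smul_smul₀ hc]
  ext x
  simpa [hc, hw] using H x

namespace IsScalarPart

variable {f f' h h' h'' : Dual K X} {ℓ ℓ' : X →ₗ[K] End K X}

lemma eq_add (hX : 2 < Module.rank K X) (hf : IsScalarPart f ℓ h) (hf' : IsScalarPart f' ℓ' h')
    (hadd : IsScalarPart (f + f') (ℓ + ℓ') h'') : h'' = h + h' := by
  obtain ⟨w, hw, hfw, hfw'⟩ := exists_ne_zero_apply_eq_zero_of_two_lt_rank hX f f'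
  obtain ⟨c, hc⟩ := hf w hfw
  obtain ⟨c', hc'⟩ := hf' w hfw'
  obtain ⟨c'', hc''⟩ := hadd w (by simp [hfw, hfw'])
  refine sub_eq_zero.mp (eq_zero_of_smul_eq_smul (Cardinal.one_lt_two.trans hX) hw fun x =>
    (?_ : _ = (c + c' - c'') • x))
  have hx := hc'' x
  simp only [LinearMap.add_apply] at hx
  simp only [LinearMap.sub_apply, LinearMap.add_apply]
  linear_combination (norm := module) hc x + hc' x - hx

lemma eq_smul (hX : 2 < Module.rank K X) (hf : IsScalarPart f ℓ h) (a : K)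
    (hsmul : IsScalarPart (a • f) (a • ℓ) h') : h' = a • h := by
  obtain ⟨w, hw, hfw, -⟩ := exists_ne_zero_apply_eq_zero_of_two_lt_rank hX f f
  obtain ⟨c, hc⟩ := hf w hfw
  obtain ⟨c', hc'⟩ := hsmul w (by simp [hfw])
  refine sub_eq_zero.mp (eq_zero_of_smul_eq_smul (Cardinal.one_lt_two.trans hX) hw fun x =>
    (?_ : _ = (a * c - c') • x))
  have hx := hc' x
  simp only [LinearMap.smul_apply] at hx
  simp only [LinearMap.sub_apply, LinearMap.smul_apply, smul_eq_mul]
  linear_combination (norm := module) a • hc x - hx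

end IsScalarPart

lemma exists_smul_of_isScalarPart {V : Type*} [AddCommGroup V] [Module K V]
    (hX : 2 < Module.rank K X) (B : V →ₗ[K] Dual K X) (ℓ : V →ₗ[K] X →ₗ[K] End K X)
    {h : V → Dual K X} (hh : ∀ f, IsScalarPart (B f) (ℓ f) (h f)) {f g : V} {y z : X}
    (hy : B f y = 1) (hz : B g z = 1) :
    ∃ c : K, ∀ x, (ℓ f x y - h f x • y) - (ℓ g x z - h g x • z) = c • x := by
  let H : V →ₗ[K] Dual K X :=
    { toFun := h
      map_add' f g := (hh f).eq_add hX (hh g) (by simpa only [map_add] using hh (f + g))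
      map_smul' a f := (hh f).eq_smul hX a (by simpa only [map_smul] using hh (a • f)) }
  let Φ : V →ₗ[K] X →ₗ[K] End K X :=
    (LinearMap.lflip (R₀ := K)).toLinearMap ∘ₗ ℓ - LinearMap.smulRightₗ ∘ₗ H
  have hΦ (f : V) (w : X) (hw : B f w = 0) : Φ f w ∈ K ∙ (1 : End K X) := by
    obtain ⟨c, hc⟩ := hh f w hw
    exact Submodule.mem_span_singleton.mpr ⟨c, LinearMap.ext fun x => (hc x).symm⟩
  obtain ⟨c, hc⟩ := Submodule.mem_span_singleton.mp (sub_mem_of_apply_eq_one B Φ _ hΦ hy hz)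
  exact ⟨c, fun x => (DFunLike.congr_fun hc x).symm⟩

/-- The relations which the idempotents `y ⊗ f` with `f y = 1` force on `ℓ x = L (x ⊗ f)`, for a
Lie `n`-derivation `L`. -/
structure HasIdempotentRelations (f : Dual K X) (ℓ : X →ₗ[K] End K X) : Prop where
  apply_ker : ∀ {y z}, f y = 1 → f z = 0 → ℓ y z = f (ℓ y y) • z - f (ℓ z y) • y
  ker_apply_ker : ∀ {y z w}, f y = 1 → f z = 0 → f w = 0 →
    ℓ z w = f (ℓ z w) • y + f (ℓ y w) • z

namespace HasIdempotentRelations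

variable {f : Dual K X} {ℓ : X →ₗ[K] End K X}

/-- Replacing `y` by `y + z'` in `ker_apply_ker` leaves `f (ℓ z w) • z' + f (ℓ z' w) • z = 0`. -/
lemma apply_ker_apply_ker (hℓ : HasIdempotentRelations f ℓ) (hf : 1 < Module.rank K f.ker)
    {y z w : X} (hy : f y = 1) (hz : f z = 0) (hw : f w = 0) : f (ℓ z w) = 0 := by
  by_contra hzw
  refine hf.not_ge (rank_le_one_iff.mpr ⟨⟨z, hz⟩, fun z' =>
    ⟨-(f (ℓ z w))⁻¹ * f (ℓ z' w), Subtype.ext ?_⟩⟩)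
  have polarized : f (ℓ z w) • (z' : X) + f (ℓ z' w) • z = 0 := by
    have hz' : f z' = 0 := z'.2
    have shifted := hℓ.ker_apply_ker (y := y + z') (by simp [hy, hz']) hz hw
    simp only [map_add, LinearMap.add_apply] at shifted
    linear_combination (norm := module) hℓ.ker_apply_ker hy hz hw - shifted
  change (-(f (ℓ z w))⁻¹ * f (ℓ z' w)) • z = z'
  rw [mul_smul, eq_neg_of_add_eq_zero_right polarized, neg_smul, smul_neg, neg_neg,
    inv_smul_smul₀ hzw]

lemma apply_apply_self (hℓ : HasIdempotentRelations f ℓ) (hf : 1 < Module.rank K f.ker) {y : X}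
    (hy : f y = 1) (x : X) : f (ℓ x x) = f (ℓ y y) * f x ^ 2 := by
  set z := x - f x • y
  have hz : f z = 0 := by simp [z, hy]
  have hyz : f (ℓ y z) = -f (ℓ z y) := by simpa [hz, hy] using congrArg f (hℓ.apply_ker hy hz)
  have hx : x = f x • y + z := by simp [z]
  have hzz := hℓ.apply_ker_apply_ker hf hy hz hz
  have expand : f (ℓ (f x • y + z) (f x • y + z)) = f (ℓ y y) * f x ^ 2 := by
    simp only [map_add, map_smul, LinearMap.add_apply, LinearMap.smul_apply, smul_eq_mul, hyz, hzz]
    ring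
  rwa [← hx] at expand

lemma isScalarPart (hℓ : HasIdempotentRelations f ℓ) (hf : 1 < Module.rank K f.ker) {y : X}
    (hy : f y = 1) : IsScalarPart f ℓ (f (ℓ y y) • f) := by
  refine fun w hw => ⟨f (ℓ y w), fun x => ?_⟩
  have hz : f (x - f x • y) = 0 := by simp [hy]
  have on_ker := hℓ.ker_apply_ker hy hz hw
  rw [hℓ.apply_ker_apply_ker hf hy hz hw] at on_ker
  have on_y := hℓ.apply_ker hy hw
  have hyw : f (ℓ y w) = -f (ℓ w y) := by simpa [hw, hy] using congrArg f on_y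
  simp only [map_sub, map_smul, LinearMap.sub_apply, LinearMap.smul_apply] at on_ker ⊢
  rw [hyw] at on_ker ⊢
  simp only [smul_eq_mul]
  linear_combination (norm := module) on_ker + f x • on_y

end HasIdempotentRelations

end LinearAlgebra

section RankOneOperators

open ContinuousLinearMap

variable {K X : Type*} [Field K] [TopologicalSpace K] [IsTopologicalRing K] [AddCommGroup X]
  [Module K X] [TopologicalSpace X] [IsTopologicalAddGroup X] [ContinuousSMul K X]

/-- The functionals `f` such that `𝒜` contains `x ⊗ f` for every vector `x`. -/
def rankOneFunctionals (𝒜 : NonUnitalSubalgebra K (X →L[K] X)) : Submodule K (X →L[K] K) where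
  carrier := {f | ∀ x, f.smulRight x ∈ 𝒜}
  add_mem' {f g} hf hg x := by
    have h : (f + g).smulRight x = f.smulRight x + g.smulRight x := by ext v; simp [add_smul]
    exact h ▸ add_mem (hf x) (hg x)
  zero_mem' x := by
    have h : (0 : X →L[K] K).smulRight x = 0 := by ext v; simp
    exact h ▸ zero_mem 𝒜
  smul_mem' c f hf x := by
    have h : (c • f).smulRight x = c • f.smulRight x := by ext v; simp [mul_smul]
    exact h ▸ SMulMemClass.smul_mem c (hf x)

/-- The bilinear map `(f, x) ↦ x ⊗ f` into `𝒜`. -/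
def rankOne (𝒜 : NonUnitalSubalgebra K (X →L[K] X)) : rankOneFunctionals 𝒜 →ₗ[K] X →ₗ[K] 𝒜 :=
  LinearMap.mk₂ K (fun f x => ⟨f.1.smulRight x, f.2 x⟩)
    (fun f g x => by ext v; simp [add_smul])
    (fun c f x => by ext v; simp [mul_smul])
    (fun f x y => by ext v; simp)
    (fun c f x => by ext v; simp [smul_comm c])

variable {𝒜 : NonUnitalSubalgebra K (X →L[K] X)}

lemma coe_rankOne (f : rankOneFunctionals 𝒜) (x : X) :
    (rankOne 𝒜 f x : X →L[K] X) = f.1.smulRight x :=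
  rfl

/-- The bilinear map `(f, x) ↦ L (x ⊗ f)`, with values in the algebraic endomorphisms of `X`. -/
def mapRankOne (L : 𝒜 →ₗ[K] (X →L[K] X)) :
    rankOneFunctionals 𝒜 →ₗ[K] X →ₗ[K] Module.End K X :=
  (rankOne 𝒜).compr₂ (coeLM K ∘ₗ L)

lemma IsLieNDerivation.hasIdempotentRelations {m : ℕ} (hm : (m : K) ≠ 0)
    {L : 𝒜 →ₗ[K] (X →L[K] X)} (hL : IsLieNDerivation 𝒜 (m + 1) L) (f : rankOneFunctionals 𝒜) :
    HasIdempotentRelations (f : X →L[K] K).toLinearMap (mapRankOne L f) := by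
  have regular : IsSMulRegular (X →L[K] X) m := fun S T (hST : m • S = m • T) => by
    rw [← Nat.cast_smul_eq_nsmul K, ← Nat.cast_smul_eq_nsmul K] at hST
    exact smul_right_injective _ hm hST
  have defect {y z : X} (hy : f.1 y = 1) (hz : f.1 z = 0) :=
    mul_eq_zero_and_mul_eq_self_of_geom_sum_apply_eq_zero (p := f.1.smulRight y)
      (by ext v; simp [hy]) regular (hL.geom_sum_apply_eq_zero (a := rankOne 𝒜 f z)
        (p := rankOne 𝒜 f y) (by ext v; simp [coe_rankOne, Ring.lie_def, hy, hz]))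
  constructor
  · intro y z (hy : f.1 y = 1) (hz : f.1 z = 0)
    have h := DFunLike.congr_fun (defect hy hz).1 y
    simp only [coe_rankOne, Ring.lie_def, mul_apply_eq_comp, smulRight_apply, hy, one_smul,
      sub_apply, add_apply, zero_apply] at h
    change L (rankOne 𝒜 f y) z =
      f.1 (L (rankOne 𝒜 f y) y) • z - f.1 (L (rankOne 𝒜 f z) y) • y
    linear_combination (norm := module) -h
  · intro y z w (hy : f.1 y = 1) (hz : f.1 z = 0) (hw : f.1 w = 0)
    have h := DFunLike.congr_fun (defect hy hz).2 w
    simp only [coe_rankOne, Ring.lie_def, mul_apply_eq_comp, sub_apply, add_apply,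
      smulRight_apply, hw, zero_smul, map_zero, zero_sub, sub_zero, map_sub, map_add, map_neg,
      map_smul, hy, hz] at h
    change L (rankOne 𝒜 f z) w =
      f.1 (L (rankOne 𝒜 f z) w) • y + f.1 (L (rankOne 𝒜 f y) w) • z
    linear_combination (norm := module) h

lemma IsLieNDerivation.exists_isScalarPart {m : ℕ} (hm : (m : K) ≠ 0)
    {L : 𝒜 →ₗ[K] (X →L[K] X)} (hL : IsLieNDerivation 𝒜 (m + 1) L) (hX : 2 < Module.rank K X)
    (f : rankOneFunctionals 𝒜) :
    ∃ h : Module.Dual K X, IsScalarPart (f : X →L[K] K).toLinearMap (mapRankOne L f) h ∧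
      ∀ x, h x = f.1 (L (rankOne 𝒜 f x) x) / f.1 x := by
  obtain rfl | hf := eq_or_ne f 0
  · exact ⟨0, fun w _ => ⟨0, by simp⟩, by simp⟩
  · have hf' : f.1.toLinearMap ≠ 0 := fun h => hf (Subtype.ext (coe_injective h))
    obtain ⟨y, hy⟩ := LinearMap.surjective hf' 1
    have relations := hL.hasIdempotentRelations hm f
    have hker := one_lt_rank_ker hX f.1.toLinearMap
    refine ⟨_, relations.isScalarPart hker hy, fun x => ?_⟩
    have hx : f.1 (L (rankOne 𝒜 f x) x) = f.1 (L (rankOne 𝒜 f y) y) * f.1 x ^ 2 :=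
      relations.apply_apply_self hker hy x
    rw [hx, sq, mul_div_assoc, mul_self_div_self]
    rfl

end RankOneOperators

/-- With the convention `a / 0 = 0`, the quotient is the scalar `h(x, f)`, also when `f x = 0`. -/
theorem statement11_general {K X : Type*} [Field K] [TopologicalSpace K] [IsTopologicalRing K]
    [AddCommGroup X] [Module K X] [TopologicalSpace X] [IsTopologicalAddGroup X]
    [ContinuousSMul K X] (hX : 2 < Module.rank K X) (𝒜 : NonUnitalSubalgebra K (X →L[K] X))
    {m : ℕ} (hm : (m : K) ≠ 0) (L : 𝒜 →ₗ[K] (X →L[K] X)) (hL : IsLieNDerivation 𝒜 (m + 1) L)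
    {f₁ f₂ : X →L[K] K} (hf₁ : ∀ x, f₁.smulRight x ∈ 𝒜) (hf₂ : ∀ x, f₂.smulRight x ∈ 𝒜)
    {y₁ y₂ : X} (hy₁ : f₁ y₁ = 1) (hy₂ : f₂ y₂ = 1) :
    ∃ c : K, ∀ x,
      (L ⟨f₁.smulRight x, hf₁ x⟩ y₁ - (f₁ (L ⟨f₁.smulRight x, hf₁ x⟩ x) / f₁ x) • y₁) -
        (L ⟨f₂.smulRight x, hf₂ x⟩ y₂ - (f₂ (L ⟨f₂.smulRight x, hf₂ x⟩ x) / f₂ x) • y₂) =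
      c • x := by
  choose h isScalarPart h_eq using hL.exists_isScalarPart hm hX
  obtain ⟨c, hc⟩ := exists_smul_of_isScalarPart hX
    (ContinuousLinearMap.coeLM K ∘ₗ (rankOneFunctionals 𝒜).subtype) (mapRankOne L) isScalarPart
    (f := (⟨f₁, hf₁⟩ : rankOneFunctionals 𝒜)) (g := (⟨f₂, hf₂⟩ : rankOneFunctionals 𝒜)) hy₁ hy₂
  simp only [h_eq] at hc
  exact ⟨c, hc⟩

lemma hAux_eq_div {X : Type*} [NormedAddCommGroup X] [NormedSpace ℂ X]
    {𝒜 : NonUnitalSubalgebra ℂ (X →L[ℂ] X)} (L : 𝒜 →ₗ[ℂ] (X →L[ℂ] X)) {x : X} {f : X →L[ℂ] ℂ}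
    (hm : f.smulRight x ∈ 𝒜) : hAux 𝒜 L x f = f (L ⟨f.smulRight x, hm⟩ x) / f x := by
  rw [hAux, dif_pos hm, ite_eq_right_iff]
  intro hx
  rw [hx, div_zero]

/-- (Lemma 3.9 of the paper.)  For nonzero `f₁, f₂ ∈ X₋^⊥(𝒜)` and
`y₁, y₂` with `fⱼ(yⱼ) = 1`, the difference `Φ_{f₁,y₁} - Φ_{f₂,y₂}` is a scalar multiple
of the identity, where `Φ_{f,y} x = (L(x ⊗ f) - h(x,f) I) y`. -/
theorem statement11 {X : Type*} [NormedAddCommGroup X] [NormedSpace ℂ X] [CompleteSpace X]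
    (hdim : 2 < Module.rank ℂ X)
    (𝒩 : Set (Submodule ℂ X)) (hnest : IsNest 𝒩)
    (hnontrivial : 𝒩 ≠ ({⊥, ⊤} : Set (Submodule ℂ X)))
    (hdimann : 1 < Module.rank ℂ ↥(annihilatorOf (nestXminus 𝒩)))
    (𝒜 : NonUnitalSubalgebra ℂ (X →L[ℂ] X))
    (h𝒜 : ∀ T ∈ 𝒜, T ∈ nestAlgebra 𝒩)
    -- (♠1) : `X₋^⊥(𝒜) ≠ {0}` and `X₋^⊥(𝒜)` is a linear subspace of `X*`
    (hS1 : XannA 𝒩 𝒜 ≠ ({0} : Set (X →L[ℂ] ℂ)) ∧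
      ∃ p : Submodule ℂ (X →L[ℂ] ℂ), (p : Set (X →L[ℂ] ℂ)) = XannA 𝒩 𝒜)
    -- (♠2) : for each `f ∈ X₋^⊥(𝒜)` there exists `y ∈ X \ X₋` with `y ⊗ f ∈ 𝒜`
    (hS2 : ∀ f ∈ XannA 𝒩 𝒜, ∃ y : X, y ∉ nestXminus 𝒩 ∧ f.smulRight y ∈ 𝒜)
    -- (♠3) : `x ⊗ f ∈ 𝒜` for every `x ∈ X(𝒜)` and `f ∈ X₋^⊥(𝒜)`
    (hS3 : ∀ x ∈ XofA 𝒜, ∀ f ∈ XannA 𝒩 𝒜, f.smulRight x ∈ 𝒜)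
    -- (♠4) : `dim(X(𝒜) ∩ ker fᵢ) > 1` and `X(𝒜) ∩ ker f₁ ∩ ker f₂ ≠ {0}`
    (hS4 : ∀ f₁ ∈ XannA 𝒩 𝒜, ∀ f₂ ∈ XannA 𝒩 𝒜,
      (∃ u v : X, u ∈ XofA 𝒜 ∧ f₁ u = 0 ∧ v ∈ XofA 𝒜 ∧ f₁ v = 0 ∧
        LinearIndependent ℂ ![u, v]) ∧
      (∃ u v : X, u ∈ XofA 𝒜 ∧ f₂ u = 0 ∧ v ∈ XofA 𝒜 ∧ f₂ v = 0 ∧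
        LinearIndependent ℂ ![u, v]) ∧
      (∃ z : X, z ≠ 0 ∧ z ∈ XofA 𝒜 ∧ f₁ z = 0 ∧ f₂ z = 0))
    -- (♠5) : `X(𝒜) = X`
    (hS5 : XofA 𝒜 = Set.univ)
    (n : ℕ) (hn : 2 ≤ n)
    (L : ↥𝒜 →ₗ[ℂ] (X →L[ℂ] X)) (hL : IsLieNDerivNU 𝒜 n L) :
    ∀ f₁ ∈ XannA 𝒩 𝒜, ∀ f₂ ∈ XannA 𝒩 𝒜, f₁ ≠ 0 → f₂ ≠ 0 →
      ∀ y₁ y₂ : X, f₁ y₁ = 1 → f₂ y₂ = 1 →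
      ∃ c : ℂ, ∀ x : X, ∀ (hm₁ : f₁.smulRight x ∈ 𝒜) (hm₂ : f₂.smulRight x ∈ 𝒜),
        ((L ⟨f₁.smulRight x, hm₁⟩) y₁ - hAux 𝒜 L x f₁ • y₁) -
          ((L ⟨f₂.smulRight x, hm₂⟩) y₂ - hAux 𝒜 L x f₂ • y₂) = c • x := by
  intro f₁ hf₁ f₂ hf₂ _ _ y₁ y₂ hy₁ hy₂
  obtain ⟨m, rfl⟩ := Nat.exists_eq_add_of_le' hn
  have rankOne_mem (f) (hf : f ∈ XannA 𝒩 𝒜) (x : X) : f.smulRight x ∈ 𝒜 :=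
    hS3 x (hS5 ▸ Set.mem_univ x) f hf
  obtain ⟨c, hc⟩ := statement11_general hdim 𝒜 (Nat.cast_ne_zero.mpr m.succ_ne_zero) L hL
    (rankOne_mem f₁ hf₁) (rankOne_mem f₂ hf₂) hy₁ hy₂
  exact ⟨c, fun x hm₁ hm₂ => by simpa only [hAux_eq_div L hm₁, hAux_eq_div L hm₂] using hc x⟩
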